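/- There exists a constant c > 0 such that for every integer n ≥ 3 there exist a set S of n points in the plane in general position and two trees T₁, T₂ ∈ 𝒯(S) such that every sequence of simultaneous edge slides transforming T₁ into T₂ has length at least c·n. -/

import Mathlib

open scoped Classical

noncomputable section

/-- Points in the plane. -/
abbrev Pt : Type := ℝ × ℝ

/-- The closed straight-line segment spanned by an (unordered) edge. -/
def segOf (e : Sym2 Pt) : Set Pt :=
  Sym2.lift ⟨fun p q => segment ℝ p q, fun p q => segment_symm ℝ p q⟩ e

/-- The set of endpoints of an edge. -/
def epts (e : Sym2 Pt) : Set Pt := {p | p ∈ e}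

/-- Two edges intersect in at most common endpoints (they do not cross). -/
def NoCrossPair (e f : Sym2 Pt) : Prop := segOf e ∩ segOf f ⊆ epts e ∩ epts f

/-- A set of edges is noncrossing: any two distinct edges meet in at most a common endpoint. -/
def NoCross (E : Finset (Sym2 Pt)) : Prop := ∀ e ∈ E, ∀ f ∈ E, e ≠ f → NoCrossPair e f

/-- `E` is the edge set of a noncrossing straight-line spanning tree on the point set `S`:
all edges are nondegenerate with endpoints in `S`, pairwise noncrossing, there are
`|S| - 1` of them, and they connect all of `S`. -/
def IsPST (S : Finset Pt) (E : Finset (Sym2 Pt)) : Prop :=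
  (∀ e ∈ E, ¬ e.IsDiag ∧ ∀ p ∈ e, p ∈ S) ∧
  NoCross E ∧ E.card + 1 = S.card ∧
  ∀ p ∈ S, ∀ q ∈ S, Relation.ReflTransGen (fun a b => s(a, b) ∈ E) p q

/-- `S` is in general position: no three of its points are collinear. -/
def GenPos (S : Finset Pt) : Prop :=
  ∀ p ∈ S, ∀ q ∈ S, ∀ r ∈ S, p ≠ q → p ≠ r → q ≠ r → ¬ Collinear ℝ ({p, q, r} : Set Pt)

/-- `S` is in convex position: every point of `S` is a vertex of the convex hull of `S`. -/
def ConvexPos (S : Finset Pt) : Prop :=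
  ∀ p ∈ S, p ∉ convexHull ℝ ((S : Set Pt) \ {p})

/-- The open interior of the triangle with vertices `p`, `q`, `r`. -/
def triInt (p q r : Pt) : Set Pt := interior (convexHull ℝ ({p, q, r} : Set Pt))

/-- `y` can be reached from `x` by a sequence of at most `m` `step`-operations. -/
def ReachesIn {α : Type*} (step : α → α → Prop) (m : ℕ) (x y : α) : Prop :=
  ∃ k ≤ m, ∃ f : ℕ → α, f 0 = x ∧ f k = y ∧ ∀ i < k, step (f i) (f (i + 1))

/-- A simultaneous rotation from `E₁` to `E₂`: a bijection `π` between the removed and the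
inserted edges such that each `e` shares an endpoint with `π e` and `π e` crosses no edge
of `E₁`. -/
def SimRotation (S : Finset Pt) (E₁ E₂ : Finset (Sym2 Pt)) : Prop :=
  IsPST S E₁ ∧ IsPST S E₂ ∧ ∃ π : Sym2 Pt → Sym2 Pt,
    Set.BijOn π ↑(E₁ \ E₂) ↑(E₂ \ E₁) ∧
    ∀ e ∈ E₁ \ E₂, (∃ p, p ∈ e ∧ p ∈ π e) ∧ ∀ f ∈ E₁, NoCrossPair (π e) f

/-- An empty-triangle rotation replaces an edge `pq` by an adjacent edge `pr` such that
no edge of either tree meets the interior of the triangle `pqr`. -/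
def EmptyTriRot (S : Finset Pt) (E₁ E₂ : Finset (Sym2 Pt)) : Prop :=
  IsPST S E₁ ∧ IsPST S E₂ ∧ ∃ p q r : Pt,
    E₁ \ E₂ = {s(p, q)} ∧ E₂ \ E₁ = {s(p, r)} ∧
    ∀ g ∈ E₁ ∪ E₂, Disjoint (segOf g) (triInt p q r)

/-- A simultaneous empty-triangle rotation. -/
def SimEmptyTriRot (S : Finset Pt) (E₁ E₂ : Finset (Sym2 Pt)) : Prop :=
  IsPST S E₁ ∧ IsPST S E₂ ∧ ∃ π : Sym2 Pt → Sym2 Pt,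
    Set.BijOn π ↑(E₁ \ E₂) ↑(E₂ \ E₁) ∧
    ∀ e ∈ E₁ \ E₂, ∃ p q r : Pt, e = s(p, q) ∧ π e = s(p, r) ∧
      ∀ g ∈ E₁ ∪ E₂, Disjoint (segOf g) (triInt p q r)

/-- An edge slide replaces `pq` by `pr`, where `qr` is an edge of both trees and no edge of
either tree meets the interior of the triangle `pqr`. -/
def EdgeSlide (S : Finset Pt) (E₁ E₂ : Finset (Sym2 Pt)) : Prop :=
  IsPST S E₁ ∧ IsPST S E₂ ∧ ∃ p q r : Pt,
    E₁ \ E₂ = {s(p, q)} ∧ E₂ \ E₁ = {s(p, r)} ∧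
    s(q, r) ∈ E₁ ∧ s(q, r) ∈ E₂ ∧
    ∀ g ∈ E₁ ∪ E₂, Disjoint (segOf g) (triInt p q r)

/-- A simultaneous edge slide. -/
def SimEdgeSlide (S : Finset Pt) (E₁ E₂ : Finset (Sym2 Pt)) : Prop :=
  IsPST S E₁ ∧ IsPST S E₂ ∧ ∃ π : Sym2 Pt → Sym2 Pt,
    Set.BijOn π ↑(E₁ \ E₂) ↑(E₂ \ E₁) ∧
    ∀ e ∈ E₁ \ E₂, ∃ p q r : Pt, e = s(p, q) ∧ π e = s(p, r) ∧
      s(q, r) ∈ E₁ ∧ s(q, r) ∈ E₂ ∧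
      ∀ g ∈ E₁ ∪ E₂, Disjoint (segOf g) (triInt p q r)

/-- `e` is an edge of the convex hull of `S`: it joins two distinct points of `S` and its
segment lies on the boundary of the convex hull of `S`. -/
def IsHullEdge (S : Finset Pt) (e : Sym2 Pt) : Prop :=
  ∃ u v : Pt, e = s(u, v) ∧ u ∈ S ∧ v ∈ S ∧ u ≠ v ∧
    segment ℝ u v ⊆ frontier (convexHull ℝ (S : Set Pt))

/-- The spanning star centered at `v`. -/
def starAt (S : Finset Pt) (v : Pt) : Finset (Sym2 Pt) := (S.erase v).image (fun w => s(v, w))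

/-- An edge-labeled tree: an edge set together with a labeling function. -/
abbrev LTree := Finset (Sym2 Pt) × (Sym2 Pt → ℕ)

/-- `T` is an edge-labeled noncrossing straight-line spanning tree on `S`: its edge set is in
`𝒯(S)` and its labeling is a bijection from the edges onto `{1, …, |S| - 1}`
(normalized to `0` on non-edges). -/
def IsLabeledPST (S : Finset Pt) (T : LTree) : Prop :=
  IsPST S T.1 ∧ Set.BijOn T.2 ↑T.1 (Set.Icc 1 (S.card - 1)) ∧ ∀ e, e ∉ T.1 → T.2 e = 0

/-- A simultaneous exchange on edge-labeled trees: an arbitrary bijection between removed and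
inserted edges transferring labels, all common edges keeping their labels. -/
def LabSimExchange (S : Finset Pt) (T₁ T₂ : LTree) : Prop :=
  IsLabeledPST S T₁ ∧ IsLabeledPST S T₂ ∧ ∃ π : Sym2 Pt → Sym2 Pt,
    Set.BijOn π ↑(T₁.1 \ T₂.1) ↑(T₂.1 \ T₁.1) ∧
    (∀ e ∈ T₁.1 \ T₂.1, T₂.2 (π e) = T₁.2 e) ∧
    ∀ e ∈ T₁.1 ∩ T₂.1, T₂.2 e = T₁.2 e

/-- A rotation on edge-labeled trees: the removed and inserted edges share an endpoint and do
not cross, the label of the removed edge is transferred, and all other labels are kept. -/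
def LabRotation (S : Finset Pt) (T₁ T₂ : LTree) : Prop :=
  IsLabeledPST S T₁ ∧ IsLabeledPST S T₂ ∧ ∃ e₁ e₂ : Sym2 Pt,
    T₁.1 \ T₂.1 = {e₁} ∧ T₂.1 \ T₁.1 = {e₂} ∧
    (∃ p, p ∈ e₁ ∧ p ∈ e₂) ∧ NoCrossPair e₁ e₂ ∧
    T₂.2 e₂ = T₁.2 e₁ ∧ ∀ e ∈ T₁.1 ∩ T₂.1, T₂.2 e = T₁.2 e

/-- An edge slide on edge-labeled trees, transferring the label of the slid edge. -/
def LabEdgeSlide (S : Finset Pt) (T₁ T₂ : LTree) : Prop :=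
  IsLabeledPST S T₁ ∧ IsLabeledPST S T₂ ∧ ∃ p q r : Pt,
    T₁.1 \ T₂.1 = {s(p, q)} ∧ T₂.1 \ T₁.1 = {s(p, r)} ∧
    s(q, r) ∈ T₁.1 ∧ s(q, r) ∈ T₂.1 ∧
    (∀ g ∈ T₁.1 ∪ T₂.1, Disjoint (segOf g) (triInt p q r)) ∧
    T₂.2 (s(p, r)) = T₁.2 (s(p, q)) ∧ ∀ e ∈ T₁.1 ∩ T₂.1, T₂.2 e = T₁.2 e

/-!
Let `b 0, …, b M` be a chain of points that bulges towards a point `a`, so that `b k` lies inside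
the triangle `a (b i) (b j)` whenever `i < k < j`. Join `a` by a single edge to one end of the
path `b 0, …, b M`; the second tree uses the other end instead. An edge `a (b j)` can only appear
by sliding across an empty triangle `a (b l) (b j)` whose side `a (b l)` is already present, and
emptiness leaves no chain point strictly between `b l` and `b j`. Hence the largest index of a
neighbour of `a` grows by at most one in each simultaneous slide, however many edges move at once.
-/

/-- Twice the signed area of the triangle `p q r`, positive if the triangle is traversed
counterclockwise. The relative position of points and segments is read off its sign. -/
def orient (p q r : Pt) : ℝ := (q.1 - p.1) * (r.2 - p.2) - (r.1 - p.1) * (q.2 - p.2)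

section Orientation

variable {p q r x : Pt}

lemma orient_rotate (p q r : Pt) : orient q r p = orient p q r := by
  simp only [orient]
  ring

lemma orient_swap (p q r : Pt) : orient q p r = -orient p q r := by
  simp only [orient]
  ring

@[simp]
lemma orient_self_left (p r : Pt) : orient p p r = 0 := by simp [orient]

@[simp]
lemma orient_self_right (p q : Pt) : orient p q q = 0 := by simp [orient]

@[simp]
lemma orient_self_outer (p q : Pt) : orient p q p = 0 := by simp [orient]

lemma orient_smul_add_smul (p q r s : Pt) {u v : ℝ} (huv : u + v = 1) :
    orient p q (u • r + v • s) = u * orient p q r + v * orient p q s := by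
  obtain rfl : v = 1 - u := by linarith
  simp only [orient, Prod.fst_add, Prod.snd_add, Prod.smul_fst, Prod.smul_snd, smul_eq_mul]
  ring

lemma continuous_orient (p q : Pt) : Continuous (orient p q) := by
  unfold orient
  fun_prop

lemma orient_eq_zero_of_collinear (h : Collinear ℝ ({p, q, r} : Set Pt)) : orient p q r = 0 := by
  obtain ⟨v, hv⟩ := (collinear_iff_of_mem (p₀ := p) (by simp)).1 h
  obtain ⟨s, rfl⟩ := hv q (by simp)
  obtain ⟨t, rfl⟩ := hv r (by simp)
  simp only [orient, vadd_eq_add, Prod.fst_add, Prod.snd_add, Prod.smul_fst, Prod.smul_snd,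
    smul_eq_mul]
  ring

lemma mem_convexHull_of_orient_pos (hpq : 0 < orient p q x) (hqr : 0 < orient q r x)
    (hrp : 0 < orient r p x) : x ∈ convexHull ℝ ({p, q, r} : Set Pt) := by
  set area := orient q r x + orient r p x + orient p q x with area_def
  have area_pos : 0 < area := by positivity
  have weights_sum : orient q r x / area + orient r p x / area + orient p q x / area = 1 := by
    rw [← add_div, ← add_div, ← area_def, div_self area_pos.ne']
  have barycentric :
      (orient q r x / area) • p + (orient r p x / area) • q + (orient p q x / area) • r = x := by
    ext <;>
    · simp only [Prod.fst_add, Prod.snd_add, Prod.smul_fst, Prod.smul_snd, smul_eq_mul]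
      field_simp
      simp only [area_def, orient]
      ring
  refine mem_convexHull_of_exists_fintype
    ![orient q r x / area, orient r p x / area, orient p q x / area] ![p, q, r] ?_ ?_ ?_ ?_
  · intro i
    fin_cases i
    exacts [(div_pos hqr area_pos).le, (div_pos hrp area_pos).le, (div_pos hpq area_pos).le]
  · simpa [Fin.sum_univ_three] using weights_sum
  · intro i
    fin_cases i <;> simp
  · simpa [Fin.sum_univ_three] using barycentric

lemma mem_triInt_of_orient_pos (hpq : 0 < orient p q x) (hqr : 0 < orient q r x)
    (hrp : 0 < orient r p x) : x ∈ triInt p q r := by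
  have open_halfPlane (c d : Pt) : IsOpen {y | 0 < orient c d y} :=
    isOpen_lt continuous_const (continuous_orient c d)
  have open_triangle :=
    (open_halfPlane p q).inter ((open_halfPlane q r).inter (open_halfPlane r p))
  exact interior_maximal (fun y hy ↦ mem_convexHull_of_orient_pos hy.1 hy.2.1 hy.2.2)
    open_triangle ⟨hpq, hqr, hrp⟩

lemma triInt_reverse (p q r : Pt) : triInt r q p = triInt p q r := by
  unfold triInt
  congr 2
  ext
  simp only [Set.mem_insert_iff, Set.mem_singleton_iff]
  tauto

end Orientation

lemma NoCrossPair.symm {e f : Sym2 Pt} (h : NoCrossPair e f) : NoCrossPair f e :=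
  fun _ hx ↦ (h hx.symm).symm

/-- The line `c d` separates the two segments, and the second can touch it only in `r`. -/
lemma noCrossPair_of_orient {c d p q r s : Pt} (hp : orient c d p ≤ 0) (hq : orient c d q ≤ 0)
    (hr : 0 ≤ orient c d r) (hs : 0 < orient c d s) (hmem : orient c d r = 0 → r ∈ s(p, q)) :
    NoCrossPair s(p, q) s(r, s) := by
  rintro x ⟨⟨t, t', ht, ht', htt', rfl⟩, ⟨u, v, hu, hv, huv, hx⟩⟩
  have hle : orient c d (t • p + t' • q) ≤ 0 := by
    rw [orient_smul_add_smul c d p q htt']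
    nlinarith
  rw [← hx, orient_smul_add_smul c d r s huv] at hle
  have hv0 : v = 0 := by nlinarith [mul_nonneg hu hr, mul_nonneg hv hs.le]
  obtain rfl : u = 1 := by linarith
  have hxr : t • p + t' • q = r := by simpa [hv0] using hx.symm
  rw [hxr]
  exact ⟨hmem (by nlinarith), Sym2.mem_mk_left r s⟩

namespace IsPST

variable {S : Finset Pt} {E : Finset (Sym2 Pt)} {p q : Pt}

lemma right_mem (hE : IsPST S E) (h : s(p, q) ∈ E) : q ∈ S :=
  (hE.1 _ h).2 q (Sym2.mem_mk_right p q)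

lemma ne (hE : IsPST S E) (h : s(p, q) ∈ E) : p ≠ q := by simpa using (hE.1 _ h).1

lemma exists_edge (hE : IsPST S E) (hne : E.Nonempty) (hp : p ∈ S) : ∃ q, s(p, q) ∈ E := by
  have hS : S.Nontrivial := by
    rw [← Finset.one_lt_card_iff_nontrivial, ← hE.2.2.1]
    have := hne.card_pos
    omega
  obtain ⟨q, hq, hqp⟩ := hS.exists_ne p
  rcases (hE.2.2.2 p hp q hq).cases_head with rfl | ⟨c, hc, -⟩
  · exact absurd rfl hqp
  · exact ⟨c, hc⟩

end IsPST

lemma SimEdgeSlide.exists_empty_triangle {S : Finset Pt} {E F : Finset (Sym2 Pt)} {p r : Pt}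
    (h : SimEdgeSlide S E F) (hF : s(p, r) ∈ F) (hE : s(p, r) ∉ E) :
    ∃ q, s(p, q) ∈ E ∧ ∀ x ∈ S, x ∉ triInt p q r := by
  obtain ⟨hE', -, π, hπ, hslide⟩ := h
  obtain ⟨e, he, hπe⟩ := hπ.surjOn (Finset.mem_coe.2 (Finset.mem_sdiff.2 ⟨hF, hE⟩))
  obtain ⟨p', q, r', rfl, hnew, hside, -, hempty⟩ := hslide e he
  have hold : s(p', q) ∈ E := (Finset.mem_sdiff.1 he).1
  have hpts (x : Pt) (hx : x ∈ S) : x ∉ triInt p' q r' := by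
    obtain ⟨y, hy⟩ := hE'.exists_edge ⟨_, hold⟩ hx
    exact Set.disjoint_left.1 (hempty _ (Finset.mem_union_left _ hy)) (left_mem_segment ℝ x y)
  rcases Sym2.eq_iff.1 (hπe.symm.trans hnew) with ⟨rfl, rfl⟩ | ⟨rfl, rfl⟩
  · exact ⟨q, hold, hpts⟩
  · exact ⟨q, Sym2.eq_swap ▸ hside, by rwa [triInt_reverse] at hpts⟩

/-- The points `b 0, b 1, …` appear in counterclockwise order around `a` and form a chain that is
convex towards `a`, so that each of them lies on the same side as `a` of the chord joining an
earlier to a later one. -/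
structure IsReflexChain (a : Pt) (b : ℕ → Pt) : Prop where
  orient_apex : ∀ {i j : ℕ}, i < j → 0 < orient a (b i) (b j)
  orient_chain : ∀ {i j k : ℕ}, i < j → j < k → 0 < orient (b k) (b j) (b i)

/-- The vertex set consisting of the apex `a` and the first `M + 1` points of the chain `b`. -/
def chainPoints (a : Pt) (b : ℕ → Pt) (M : ℕ) : Finset Pt :=
  insert a ((Finset.range (M + 1)).image b)

/-- The path `b 0, …, b M` together with the edge that hangs the apex `a` on `b m`. -/
def chainTree (a : Pt) (b : ℕ → Pt) (M m : ℕ) : Finset (Sym2 Pt) :=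
  insert s(a, b m) ((Finset.range M).image fun i ↦ s(b i, b (i + 1)))

/-- The indices of the chain points joined to the apex `a`; their maximum is the potential
function of the lower bound. -/
def rungs (a : Pt) (b : ℕ → Pt) (E : Finset (Sym2 Pt)) : Set ℕ := {i | s(a, b i) ∈ E}

section Chain

variable {a : Pt} {b : ℕ → Pt} {M m : ℕ}

lemma mem_chainPoints {p : Pt} : p ∈ chainPoints a b M ↔ p = a ∨ ∃ i ≤ M, b i = p := by
  simp [chainPoints]

lemma mem_chainTree {e : Sym2 Pt} :
    e ∈ chainTree a b M m ↔ e = s(a, b m) ∨ ∃ i < M, s(b i, b (i + 1)) = e := by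
  simp [chainTree]

lemma apex_mem_chainPoints : a ∈ chainPoints a b M := mem_chainPoints.2 (.inl rfl)

lemma chain_mem_chainPoints {i : ℕ} (hi : i ≤ M) : b i ∈ chainPoints a b M :=
  mem_chainPoints.2 (.inr ⟨i, hi, rfl⟩)

lemma apex_edge_mem_chainTree : s(a, b m) ∈ chainTree a b M m := mem_chainTree.2 (.inl rfl)

lemma path_edge_mem_chainTree {i : ℕ} (hi : i < M) : s(b i, b (i + 1)) ∈ chainTree a b M m :=
  mem_chainTree.2 (.inr ⟨i, hi, rfl⟩)

lemma reflTransGen_chainTree (hm : m ≤ M) :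
    ∀ p ∈ chainPoints a b M, ∀ q ∈ chainPoints a b M,
      Relation.ReflTransGen (fun x y ↦ s(x, y) ∈ chainTree a b M m) p q := by
  have adj_symm : Std.Symm fun x y ↦ s(x, y) ∈ chainTree a b M m :=
    ⟨fun x y h ↦ by rwa [Sym2.eq_swap]⟩
  have from_zero (i : ℕ) (hi : i ≤ M) :
      Relation.ReflTransGen (fun x y ↦ s(x, y) ∈ chainTree a b M m) (b 0) (b i) := by
    induction i with
    | zero => exact .refl
    | succ i ih => exact (ih (by omega)).tail (path_edge_mem_chainTree hi)
  have from_zero_to_all (p : Pt) (hp : p ∈ chainPoints a b M) :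
      Relation.ReflTransGen (fun x y ↦ s(x, y) ∈ chainTree a b M m) (b 0) p := by
    rcases mem_chainPoints.1 hp with rfl | ⟨i, hi, rfl⟩
    · exact (from_zero m hm).tail (Sym2.eq_swap ▸ apex_edge_mem_chainTree)
    · exact from_zero i hi
  exact fun p hp q hq ↦ (symm_of _ (from_zero_to_all p hp)).trans (from_zero_to_all q hq)

end Chain

namespace IsReflexChain

variable {a : Pt} {b : ℕ → Pt} {M m : ℕ}

lemma apex_ne (h : IsReflexChain a b) (i : ℕ) : a ≠ b i := by
  rintro rfl
  simpa using h.orient_apex i.lt_succ_self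

lemma orient_apex_nonneg (h : IsReflexChain a b) {i j : ℕ} (hij : i ≤ j) :
    0 ≤ orient a (b i) (b j) := by
  rcases hij.eq_or_lt with rfl | hlt
  · simp
  · exact (h.orient_apex hlt).le

lemma eq_of_orient_apex_eq_zero (h : IsReflexChain a b) {i j : ℕ}
    (h0 : orient a (b i) (b j) = 0) : i = j := by
  rcases lt_trichotomy i j with hlt | heq | hgt
  · exact absurd h0 (h.orient_apex hlt).ne'
  · exact heq
  · have hpos := h.orient_apex hgt
    rw [orient_swap, ← orient_rotate, h0, neg_zero] at hpos
    exact absurd hpos (lt_irrefl 0)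

lemma injective (h : IsReflexChain a b) : Function.Injective b :=
  fun _ _ heq ↦ h.eq_of_orient_apex_eq_zero (by rw [heq, orient_self_right])

lemma orient_chain_ne_zero (h : IsReflexChain a b) {i j k : ℕ} (hij : i ≠ j) (hik : i ≠ k)
    (hjk : j ≠ k) : orient (b i) (b j) (b k) ≠ 0 := by
  wlog hlt : i < j generalizing i j
  · rw [orient_swap, neg_ne_zero]
    exact this hij.symm hjk hik (by omega)
  rcases hik.lt_or_gt with hik | hki
  · rcases hjk.lt_or_gt with hjk | hkj
    · rw [orient_swap, orient_rotate, neg_ne_zero]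
      exact (h.orient_chain hlt hjk).ne'
    · rw [← orient_rotate]
      exact (h.orient_chain hik hkj).ne'
  · rw [orient_swap, neg_ne_zero]
    exact (h.orient_chain hki hlt).ne'

lemma card_chainPoints (h : IsReflexChain a b) : (chainPoints a b M).card = M + 2 := by
  have apex_notMem : a ∉ (Finset.range (M + 1)).image b := by
    simpa using fun i _ ↦ (h.apex_ne i).symm
  rw [chainPoints, Finset.card_insert_of_notMem apex_notMem,
    Finset.card_image_of_injective _ h.injective, Finset.card_range]

lemma genPos_chainPoints (h : IsReflexChain a b) : GenPos (chainPoints a b M) := by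
  intro p hp q hq r hr hpq hpr hqr hcol
  have h0 := orient_eq_zero_of_collinear hcol
  rcases mem_chainPoints.1 hp with rfl | ⟨i, -, rfl⟩ <;>
    rcases mem_chainPoints.1 hq with rfl | ⟨j, -, rfl⟩ <;>
    rcases mem_chainPoints.1 hr with rfl | ⟨k, -, rfl⟩
  · exact hpq rfl
  · exact hpq rfl
  · exact hpr rfl
  · exact hqr (congrArg b (h.eq_of_orient_apex_eq_zero h0))
  · exact hqr rfl
  · rw [← orient_rotate] at h0
    exact hpr (congrArg b (h.eq_of_orient_apex_eq_zero h0)).symm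
  · rw [orient_rotate] at h0
    exact hpq (congrArg b (h.eq_of_orient_apex_eq_zero h0))
  · exact h.orient_chain_ne_zero (ne_of_apply_ne b hpq) (ne_of_apply_ne b hpr)
      (ne_of_apply_ne b hqr) h0

lemma noCrossPair_path (h : IsReflexChain a b) {i j : ℕ} (hij : i < j) :
    NoCrossPair s(b i, b (i + 1)) s(b j, b (j + 1)) := by
  have before : orient a (b (i + 1)) (b i) ≤ 0 := by
    rw [orient_swap, ← orient_rotate, neg_nonpos]
    exact h.orient_apex_nonneg i.le_succ
  refine noCrossPair_of_orient before (by simp) (h.orient_apex_nonneg hij)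
    (h.orient_apex (by omega)) fun h0 ↦ ?_
  rw [← h.eq_of_orient_apex_eq_zero h0]
  exact Sym2.mem_mk_right _ _

lemma noCrossPair_apex (h : IsReflexChain a b) (m i : ℕ) :
    NoCrossPair s(a, b m) s(b i, b (i + 1)) := by
  rcases le_or_gt m i with hmi | him
  · refine noCrossPair_of_orient (c := a) (d := b m) (by simp) (by simp)
      (h.orient_apex_nonneg hmi) (h.orient_apex (by omega)) fun h0 ↦ ?_
    rw [h.eq_of_orient_apex_eq_zero h0]
    exact Sym2.mem_mk_right _ _
  · rw [Sym2.eq_swap (a := b i)]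
    refine noCrossPair_of_orient (c := b m) (d := a) (by simp) (by simp) ?_ ?_ fun h0 ↦ ?_
    · rw [← orient_rotate]
      exact h.orient_apex_nonneg him
    · rw [← orient_rotate]
      exact h.orient_apex him
    · rw [← orient_rotate] at h0
      rw [h.eq_of_orient_apex_eq_zero h0]
      exact Sym2.mem_mk_right _ _

lemma noCross_chainTree (h : IsReflexChain a b) : NoCross (chainTree a b M m) := by
  intro e he f hf hef
  rcases mem_chainTree.1 he with rfl | ⟨i, -, rfl⟩ <;>
    rcases mem_chainTree.1 hf with rfl | ⟨j, -, rfl⟩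
  · exact absurd rfl hef
  · exact h.noCrossPair_apex m j
  · exact (h.noCrossPair_apex m i).symm
  · rcases lt_trichotomy i j with hij | rfl | hji
    · exact h.noCrossPair_path hij
    · exact absurd rfl hef
    · exact (h.noCrossPair_path hji).symm

lemma apex_notMem_path_edge (h : IsReflexChain a b) (i : ℕ) : a ∉ s(b i, b (i + 1)) := by
  simpa using ⟨h.apex_ne i, h.apex_ne (i + 1)⟩

lemma card_chainTree (h : IsReflexChain a b) : (chainTree a b M m).card = M + 1 := by
  have path_injective : Function.Injective fun i ↦ s(b i, b (i + 1)) := by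
    intro i j hij
    simp only [Sym2.eq_iff, h.injective.eq_iff] at hij
    omega
  have apex_edge_notMem : s(a, b m) ∉ (Finset.range M).image fun i ↦ s(b i, b (i + 1)) := by
    intro hmem
    obtain ⟨i, -, hi⟩ := Finset.mem_image.1 hmem
    exact h.apex_notMem_path_edge i (hi ▸ Sym2.mem_mk_left a (b m))
  rw [chainTree, Finset.card_insert_of_notMem apex_edge_notMem,
    Finset.card_image_of_injective _ path_injective, Finset.card_range]

lemma isPST_chainTree (h : IsReflexChain a b) (hm : m ≤ M) :
    IsPST (chainPoints a b M) (chainTree a b M m) := by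
  refine ⟨fun e he ↦ ?_, h.noCross_chainTree, by rw [h.card_chainTree, h.card_chainPoints],
    reflTransGen_chainTree hm⟩
  rcases mem_chainTree.1 he with rfl | ⟨i, hi, rfl⟩
  · simpa using ⟨h.apex_ne m, apex_mem_chainPoints, chain_mem_chainPoints hm⟩
  · simpa using ⟨h.injective.ne i.succ_ne_self.symm, chain_mem_chainPoints hi.le,
      chain_mem_chainPoints hi⟩

lemma rungs_chainTree (h : IsReflexChain a b) : rungs a b (chainTree a b M m) = {m} := by
  ext l
  refine ⟨fun hl ↦ ?_, fun hl ↦ ?_⟩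
  · rcases mem_chainTree.1 hl with heq | ⟨i, -, heq⟩
    · exact h.injective (Sym2.congr_right.1 heq)
    · exact absurd (heq ▸ Sym2.mem_mk_left a (b l)) (h.apex_notMem_path_edge i)
  · rw [hl]
    exact apex_edge_mem_chainTree

lemma le_of_chain_mem_chainPoints (h : IsReflexChain a b) {i : ℕ}
    (hi : b i ∈ chainPoints a b M) : i ≤ M := by
  rcases mem_chainPoints.1 hi with heq | ⟨j, hj, heq⟩
  · exact absurd heq.symm (h.apex_ne i)
  · exact h.injective heq ▸ hj

lemma mem_triInt (h : IsReflexChain a b) {i j k : ℕ} (hij : i < j) (hjk : j < k) :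
    b j ∈ triInt a (b i) (b k) := by
  refine mem_triInt_of_orient_pos (h.orient_apex hij) ?_ ?_
  · rw [← orient_rotate]
    exact h.orient_chain hij hjk
  · rw [← orient_rotate]
    exact h.orient_apex hjk

lemma add_one_mem_upperBounds_rungs (h : IsReflexChain a b) {E F : Finset (Sym2 Pt)} {t : ℕ}
    (hslide : SimEdgeSlide (chainPoints a b M) E F) (ht : t ∈ upperBounds (rungs a b E)) :
    t + 1 ∈ upperBounds (rungs a b F) := by
  intro j hjF
  by_cases hjE : s(a, b j) ∈ E
  · exact (ht hjE).trans t.le_succ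
  obtain ⟨q, hq, hempty⟩ := hslide.exists_empty_triangle hjF hjE
  rcases mem_chainPoints.1 (hslide.1.right_mem hq) with rfl | ⟨l, -, rfl⟩
  · exact absurd rfl (hslide.1.ne hq)
  by_contra! hj
  have hlt : l ≤ t := ht hq
  have hjM : j ≤ M := h.le_of_chain_mem_chainPoints (hslide.2.1.right_mem hjF)
  exact hempty (b (l + 1)) (chain_mem_chainPoints (by omega))
    (h.mem_triInt l.lt_succ_self (by omega))

lemma add_mem_upperBounds_rungs (h : IsReflexChain a b) {f : ℕ → Finset (Sym2 Pt)} {k t : ℕ}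
    (hslide : ∀ i < k, SimEdgeSlide (chainPoints a b M) (f i) (f (i + 1)))
    (ht : t ∈ upperBounds (rungs a b (f 0))) : t + k ∈ upperBounds (rungs a b (f k)) := by
  induction k with
  | zero => exact ht
  | succ k ih =>
    exact h.add_one_mem_upperBounds_rungs (hslide k k.lt_succ_self)
      (ih fun i hi ↦ hslide i (hi.trans k.lt_succ_self))

theorem le_add_of_simEdgeSlides (h : IsReflexChain a b) {m' k : ℕ} {f : ℕ → Finset (Sym2 Pt)}
    (h0 : f 0 = chainTree a b M m) (hk : f k = chainTree a b M m')
    (hslide : ∀ i < k, SimEdgeSlide (chainPoints a b M) (f i) (f (i + 1))) : m' ≤ m + k := by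
  have hm : m ∈ upperBounds (rungs a b (f 0)) := by simp [h0, h.rungs_chainTree]
  exact h.add_mem_upperBounds_rungs hslide hm (by simp [hk, h.rungs_chainTree])

end IsReflexChain

lemma orient_hyperbola {x y z : ℝ} (hx : x ≠ 0) (hy : y ≠ 0) (hz : z ≠ 0) :
    orient (z⁻¹, z) (y⁻¹, y) (x⁻¹, x) = (y - x) * (z - y) * (z - x) / (x * y * z) := by
  simp only [orient]
  field_simp
  ring

lemma isReflexChain_hyperbola :
    IsReflexChain 0 fun i : ℕ ↦ (((i : ℝ) + 1)⁻¹, (i : ℝ) + 1) where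
  orient_apex {i j} hij := by
    have hlt : (i : ℝ) + 1 < j + 1 := by gcongr
    have hinv : ((j : ℝ) + 1)⁻¹ < ((i : ℝ) + 1)⁻¹ := by gcongr
    simp only [orient, Prod.fst_zero, Prod.snd_zero, sub_zero, sub_pos]
    gcongr
  orient_chain {i j k} hij hjk := by
    have hij' : (0 : ℝ) < (j + 1) - (i + 1) := by simpa using hij
    have hjk' : (0 : ℝ) < (k + 1) - (j + 1) := by simpa using hjk
    have hik' : (0 : ℝ) < (k + 1) - (i + 1) := by linarith
    rw [orient_hyperbola (by positivity) (by positivity) (by positivity)]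
    positivity

/-- there are `n`-point sets in general position with two trees at simultaneous
edge slide distance `Ω(n)`. -/
theorem stmt_10 :
    ∃ c : ℝ, 0 < c ∧ ∀ n : ℕ, 3 ≤ n →
      ∃ S : Finset Pt, S.card = n ∧ GenPos S ∧
        ∃ E₁ E₂ : Finset (Sym2 Pt), IsPST S E₁ ∧ IsPST S E₂ ∧
          ∀ (k : ℕ) (f : ℕ → Finset (Sym2 Pt)), f 0 = E₁ → f k = E₂ →
            (∀ i < k, SimEdgeSlide S (f i) (f (i + 1))) → c * (n : ℝ) ≤ (k : ℝ) := by
  refine ⟨1 / 3, by norm_num, fun n hn ↦ ?_⟩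
  obtain ⟨M, rfl⟩ : ∃ M, n = M + 2 := ⟨n - 2, by omega⟩
  have chain := isReflexChain_hyperbola
  refine ⟨_, chain.card_chainPoints, chain.genPos_chainPoints, _, _,
    chain.isPST_chainTree M.zero_le, chain.isPST_chainTree le_rfl, fun k f h0 hk hslide ↦ ?_⟩
  have hMk : (M : ℝ) ≤ k := by simpa using chain.le_add_of_simEdgeSlides h0 hk hslide
  have hM : (1 : ℝ) ≤ M := by exact_mod_cast (by omega : 1 ≤ M)
  push_cast
  linarith
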